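/- arXiv:1811.04052 — 2 statements merged into one kernel-verified Lean document; each statement's English description precedes it below -/
import Mathlib

section
/- Let G be a weighted graph with k vertices and h connected components, where h < k. Then G has a 2-way split whose weight is at most 2·w(E)/(k − h + 1), where E is the edge set of G. -/
open Finset

namespace KCut

open scoped Classical

/-- Number of connected components of a graph. -/
noncomputable def numComp {V : Type*} (G : SimpleGraph V) : ℕ :=
  Nat.card G.ConnectedComponent

/-- `S` is an `h`-way split of `G`: a set of edges of `G` whose removal increases the
number of connected components by `h - 1`. -/
def IsSplit {V : Type*} (G : SimpleGraph V) (S : Finset (Sym2 V)) (h : ℕ) : Prop :=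
  ↑S ⊆ G.edgeSet ∧ numComp (G.deleteEdges ↑S) = (h - 1) + numComp G

/-- Total weight of a finite set of edges. -/
noncomputable def weight {V : Type*} (w : Sym2 V → ℝ) (S : Finset (Sym2 V)) : ℝ :=
  ∑ e ∈ S, w e

/-- Density of an `h`-way split: its weight divided by `h - 1`. -/
noncomputable def density {V : Type*} (w : Sym2 V → ℝ) (S : Finset (Sym2 V)) (h : ℕ) : ℝ :=
  weight w S / ((h : ℝ) - 1)

/-- `β(G) = |E|/|V|`. -/
noncomputable def beta {V : Type*} [Fintype V] (G : SimpleGraph V) [Fintype G.edgeSet] : ℝ :=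
  (G.edgeFinset.card : ℝ) / (Fintype.card V : ℝ)

/-- A matching: a set of pairwise vertex-disjoint edges of `G`. -/
def IsMatchingSet {V : Type*} (G : SimpleGraph V) (M : Finset (Sym2 V)) : Prop :=
  ↑M ⊆ G.edgeSet ∧ ∀ e ∈ M, ∀ f ∈ M, e ≠ f → ∀ v : V, v ∈ e → v ∉ f

/-- A minimum `h`-way split: an `h`-way split of minimum total weight. -/
def IsMinSplit {V : Type*} (G : SimpleGraph V) (w : Sym2 V → ℝ)
    (S : Finset (Sym2 V)) (h : ℕ) : Prop :=
  IsSplit G S h ∧ ∀ T : Finset (Sym2 V), IsSplit G T h → weight w S ≤ weight w T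

/-- An `h`-way split `S` is sparse if no split of separation degree at most `h`
has smaller density. -/
def IsSparse {V : Type*} (G : SimpleGraph V) (w : Sym2 V → ℝ)
    (S : Finset (Sym2 V)) (h : ℕ) : Prop :=
  ∀ h' : ℕ, h' ≤ h → 2 ≤ h' → ∀ S' : Finset (Sym2 V), IsSplit G S' h' →
    density w S h ≤ density w S' h'
lemma reach_aux {V : Type*} (H : SimpleGraph V) (a b : V) {x y : V} (p : H.Walk x y) :
    (H.deleteEdges {s(a, b)}).Reachable x y ∨
      (((H.deleteEdges {s(a, b)}).Reachable x a ∨ (H.deleteEdges {s(a, b)}).Reachable x b) ∧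
      ((H.deleteEdges {s(a, b)}).Reachable y a ∨ (H.deleteEdges {s(a, b)}).Reachable y b)) := by
  induction p with
  | nil => exact Or.inl (SimpleGraph.Reachable.refl _)
  | @cons u v w h p ih =>
    by_cases he : s(u, v) = s(a, b)
    · right
      rcases Sym2.eq_iff.1 he with ⟨rfl, rfl⟩ | ⟨rfl, rfl⟩
      · refine ⟨Or.inl (SimpleGraph.Reachable.refl _), ?_⟩
        rcases ih with ih | ih
        · exact Or.inr ih.symm
        · exact ih.2
      · refine ⟨Or.inr (SimpleGraph.Reachable.refl _), ?_⟩
        rcases ih with ih | ih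
        · exact Or.inl ih.symm
        · exact ih.2
    · have huv : (H.deleteEdges {s(a, b)}).Reachable u v := by
        apply SimpleGraph.Adj.reachable
        rw [SimpleGraph.deleteEdges_adj]
        exact ⟨h, he⟩
      rcases ih with ih | ⟨ih | ih, ih'⟩
      · exact Or.inl (huv.trans ih)
      · exact Or.inr ⟨Or.inl (huv.trans ih), ih'⟩
      · exact Or.inr ⟨Or.inr (huv.trans ih), ih'⟩

lemma numComp_delete_one {V : Type*} [Finite V] (H : SimpleGraph V) (e : Sym2 V) :
    numComp (H.deleteEdges {e}) ≤ numComp H + 1 := by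
  induction e with
  | _ a b =>
  have hle : H.deleteEdges {s(a, b)} ≤ H := SimpleGraph.deleteEdges_le _
  let f : (H.deleteEdges {s(a, b)}).ConnectedComponent → Option H.ConnectedComponent := fun c =>
    if c = (H.deleteEdges {s(a, b)}).connectedComponentMk b then none
    else some (c.map (SimpleGraph.Hom.ofLE hle))
  have hf : Function.Injective f := by
    intro c d
    induction c using SimpleGraph.ConnectedComponent.ind with
    | _ x =>
    induction d using SimpleGraph.ConnectedComponent.ind with
    | _ y =>
    intro h
    simp only [f] at h
    split_ifs at h with h1 h2 h2
    · rw [h1, h2]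
    · simp only [SimpleGraph.ConnectedComponent.map_mk, Option.some.injEq,
        SimpleGraph.ConnectedComponent.eq] at h h1 h2 ⊢
      obtain ⟨p⟩ := h
      rcases reach_aux H a b p with h | ⟨h3 | h3, h4 | h4⟩
      · exact h
      · exact h3.trans h4.symm
      · exact absurd h4 h2
      · exact absurd h3 h1
      · exact absurd h3 h1
  have := Nat.card_le_card_of_injective f hf
  rwa [Finite.card_option] at this

lemma numComp_star {V : Type*} [Finite V] (G : SimpleGraph V) (v u : V) (huv : G.Adj v u)
    (S : Set (Sym2 V)) (hS : ∀ x, s(v, x) ∈ G.edgeSet → s(v, x) ∈ S) :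
    numComp (G.deleteEdges S) ≠ numComp G := by
  intro h
  have hle : G.deleteEdges S ≤ G := SimpleGraph.deleteEdges_le _
  have hs := SimpleGraph.ConnectedComponent.surjective_map_ofLE hle
  have hb := (Nat.bijective_iff_surjective_and_card _).2 ⟨hs, h⟩
  have := @hb.1 ((G.deleteEdges S).connectedComponentMk v)
    ((G.deleteEdges S).connectedComponentMk u) (by
      simpa using huv.reachable)
  rw [SimpleGraph.ConnectedComponent.eq] at this
  obtain ⟨p⟩ := this
  cases p with
  | nil => exact huv.ne rfl
  | @cons _ x _ hx p =>
    rw [SimpleGraph.deleteEdges_adj] at hx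
    exact hx.2 (hS _ hx.1)

lemma exists_sub {V : Type*} [Finite V] (G : SimpleGraph V) (T : Finset (Sym2 V))
    (hT : numComp (G.deleteEdges (T : Set (Sym2 V))) ≠ numComp G) :
    ∃ S ⊆ T, numComp (G.deleteEdges (S : Set (Sym2 V))) = 1 + numComp G := by
  induction T using Finset.induction_on with
  | empty => simp at hT
  | insert e T he ih =>
    by_cases h : numComp (G.deleteEdges (T : Set (Sym2 V))) = numComp G
    · refine ⟨insert e T, subset_rfl, ?_⟩
      have h1 : G.deleteEdges ((insert e T : Finset (Sym2 V)) : Set (Sym2 V)) =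
          (G.deleteEdges (T : Set (Sym2 V))).deleteEdges {e} := by
        rw [SimpleGraph.deleteEdges_deleteEdges]
        congr 1
        ext x
        simp
      have h2 := numComp_delete_one (G.deleteEdges (T : Set (Sym2 V))) e
      rw [← h1] at h2
      have h3 : numComp G ≤ numComp (G.deleteEdges ((insert e T : Finset (Sym2 V)) : Set (Sym2 V))) :=
        SimpleGraph.ConnectedComponent.card_le_card_of_le (SimpleGraph.deleteEdges_le _)
      omega
    · obtain ⟨S, hS, h'⟩ := ih h
      exact ⟨S, hS.trans (Finset.subset_insert _ _), h'⟩

lemma isolated_count {V : Type*} [Fintype V] (G : SimpleGraph V)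
    (hh : numComp G < Fintype.card V) :
    Fintype.card V + 1 ≤ #{v : V | ∃ u, G.Adj v u} + numComp G := by
  have hex : ∃ v u, G.Adj v u := by
    by_contra hcon
    push Not at hcon
    have : Function.Injective G.connectedComponentMk := by
      intro x y h
      rw [SimpleGraph.ConnectedComponent.eq] at h
      obtain ⟨p⟩ := h
      cases p with
      | nil => rfl
      | cons h _ => exact absurd h (hcon _ _)
    have := Nat.card_le_card_of_injective _ this
    rw [Nat.card_eq_fintype_card (α := V)] at this
    exact absurd hh (not_lt.2 this)
  obtain ⟨v, u, hvu⟩ := hex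
  have key : ∀ x y, (¬ ∃ u, G.Adj x u) → G.Reachable x y → x = y := by
    rintro x y hx ⟨p⟩
    cases p with
    | nil => rfl
    | cons h _ => exact absurd ⟨_, h⟩ hx
  let f : Option {x : V // ¬ ∃ u, G.Adj x u} → G.ConnectedComponent := fun o =>
    G.connectedComponentMk (o.elim v Subtype.val)
  have hf : Function.Injective f := by
    rintro (_ | x) (_ | y) h <;>
      simp only [f, Option.elim, SimpleGraph.ConnectedComponent.eq] at h
    · rfl
    · exact absurd ⟨u, (key _ _ y.2 h.symm) ▸ hvu⟩ y.2
    · exact absurd ⟨u, (key _ _ x.2 h) ▸ hvu⟩ x.2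
    · exact congrArg some (Subtype.ext (key _ _ x.2 h))
  have h1 := Nat.card_le_card_of_injective f hf
  rw [Finite.card_option, Nat.card_eq_fintype_card, Fintype.card_subtype] at h1
  have h2 := Finset.card_filter_add_card_filter_not (s := (Finset.univ : Finset V))
    (fun v => ∃ u, G.Adj v u)
  rw [Finset.card_univ] at h2
  unfold numComp
  omega

theorem exists_two_way_split_of_disconnected
    {V : Type*} [Fintype V] [DecidableEq V]
    (G : SimpleGraph V) [DecidableRel G.Adj]
    (w : Sym2 V → ℝ) (hw : ∀ e ∈ G.edgeSet, 0 < w e)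
    (hh : numComp G < Fintype.card V) :
    ∃ S : Finset (Sym2 V), IsSplit G S 2 ∧
      weight w S ≤ 2 * weight w G.edgeFinset /
        ((Fintype.card V : ℝ) - (numComp G : ℝ) + 1) := by
  obtain ⟨N, hN, hcount⟩ : ∃ N : Finset V, (∀ v ∈ N, ∃ u, G.Adj v u) ∧
      Fintype.card V + 1 ≤ #N + numComp G :=
    ⟨_, fun v hv => ((@Finset.mem_filter _ _ (_) _ _).1 hv).2, isolated_count G hh⟩
  set B : ℝ := 2 * weight w G.edgeFinset / ((Fintype.card V : ℝ) - (numComp G : ℝ) + 1) with hB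
  have hhR : (numComp G : ℝ) < Fintype.card V := by exact_mod_cast hh
  have hpos : 0 < (Fintype.card V : ℝ) - (numComp G : ℝ) + 1 := by linarith
  have hw0 : ∀ e ∈ G.edgeFinset, 0 ≤ w e := fun e he =>
    (hw e (SimpleGraph.mem_edgeFinset.1 he)).le
  have hW : 0 ≤ weight w G.edgeFinset := Finset.sum_nonneg hw0
  have hB0 : 0 ≤ B := by positivity
  have hcR : (Fintype.card V : ℝ) - (numComp G : ℝ) + 1 ≤ #N := by
    have : ((Fintype.card V + 1 : ℕ) : ℝ) ≤ ((#N + numComp G : ℕ) : ℝ) := by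
      exact_mod_cast hcount
    push_cast at this
    linarith
  have hsum : ∑ v : V, weight w {e ∈ G.edgeFinset | v ∈ e} = 2 * weight w G.edgeFinset := by
    unfold weight
    simp_rw [Finset.sum_filter]
    rw [Finset.sum_comm, Finset.mul_sum]
    refine Finset.sum_congr rfl fun e he => ?_
    rw [← Finset.sum_filter, Finset.sum_const, nsmul_eq_mul]
    congr 1
    have hd := G.not_isDiag_of_mem_edgeSet (SimpleGraph.mem_edgeFinset.1 he)
    have := Sym2.card_toFinset_of_not_isDiag e hd
    rw [show (Finset.univ.filter fun v => v ∈ e) = e.toFinset by ext; simp, this]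
    norm_num
  have hnn : ∀ v : V, 0 ≤ weight w {e ∈ G.edgeFinset | v ∈ e} := fun v =>
    Finset.sum_nonneg fun e he => hw0 e (Finset.mem_filter.1 he).1
  have hNpos : 0 < #N := by
    have : (0 : ℝ) < #N := by linarith
    exact_mod_cast this
  obtain ⟨v, hvN, hv⟩ : ∃ v ∈ N, weight w {e ∈ G.edgeFinset | v ∈ e} ≤ B := by
    apply Finset.exists_le_of_sum_le (Finset.card_pos.1 hNpos)
    calc ∑ v ∈ N, weight w {e ∈ G.edgeFinset | v ∈ e}
        ≤ ∑ v : V, weight w {e ∈ G.edgeFinset | v ∈ e} :=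
          Finset.sum_le_sum_of_subset_of_nonneg (Finset.subset_univ _) fun v _ _ => hnn v
      _ = 2 * weight w G.edgeFinset := hsum
      _ = ((Fintype.card V : ℝ) - (numComp G : ℝ) + 1) * B := by
          rw [hB]; field_simp
      _ ≤ #N * B := by gcongr
      _ = ∑ v ∈ N, B := by simp
  obtain ⟨u, hvu⟩ := hN v hvN
  obtain ⟨S, hST, hS⟩ := exists_sub G {e ∈ G.edgeFinset | v ∈ e}
    (numComp_star G v u hvu _ (by
      intro x hx
      simpa using hx))
  refine ⟨S, ⟨?_, hS⟩, le_trans ?_ hv⟩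
  · intro e he
    exact SimpleGraph.mem_edgeFinset.1 (Finset.mem_filter.1 (hST he)).1
  · exact Finset.sum_le_sum_of_subset_of_nonneg hST fun e he _ =>
      hw0 e (Finset.mem_filter.1 he).1

end KCut
end

section
/- Let G be a connected normalized weighted graph on k vertices and set ε = 1/(35 · β(G)). If k ≥ 3, then G has a 3-way split with density at most (2 − ε/2)/k. If k ≥ 4, then G has a 4-way split with density at most (2 − ε/3)/k. -/
open Finset

namespace KCut

open scoped Classical

section helpers
variable {V : Type*} [Fintype V]

lemma numComp_step (G : SimpleGraph V) (S : Finset (Sym2 V)) (a b : V) :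
    numComp (G.deleteEdges ↑(insert s(a, b) S)) ≤ numComp (G.deleteEdges ↑S) + 1 := by
  set G1 := G.deleteEdges (↑(insert s(a, b) S) : Set (Sym2 V)) with hG1
  set G2 := G.deleteEdges (↑S : Set (Sym2 V)) with hG2
  have hle : G1 ≤ G2 := by
    intro x y h
    simp only [hG1, hG2, SimpleGraph.deleteEdges_adj, Finset.coe_insert, Set.mem_insert_iff] at h ⊢
    tauto
  have key : ∀ x y, G2.Reachable x y → G1.Reachable x y ∨
      ((G1.Reachable x a ∨ G1.Reachable x b) ∧ (G1.Reachable y a ∨ G1.Reachable y b)) := by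
    intro x y h
    obtain ⟨p⟩ := h
    induction p with
    | nil => left; exact SimpleGraph.Reachable.refl _
    | @cons u v z h p ih =>
      by_cases he : s(u, v) = s(a, b)
      · rw [Sym2.eq_iff] at he
        have hv : G1.Reachable v a ∨ G1.Reachable v b := by
          rcases he with ⟨_, rfl⟩ | ⟨_, rfl⟩
          · right; rfl
          · left; rfl
        have hu : G1.Reachable u a ∨ G1.Reachable u b := by
          rcases he with ⟨rfl, _⟩ | ⟨rfl, _⟩
          · left; rfl
          · right; rfl
        right
        refine ⟨hu, ?_⟩
        rcases ih with ih | ih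
        · exact hv.imp (fun h => ih.symm.trans h) (fun h => ih.symm.trans h)
        · exact ih.2
      · have hadj : G1.Reachable u v := by
          apply SimpleGraph.Adj.reachable
          simp only [hG1, hG2, SimpleGraph.deleteEdges_adj, Finset.coe_insert, Set.mem_insert_iff] at h ⊢
          tauto
        rcases ih with ih | ih
        · left; exact hadj.trans ih
        · right
          exact ⟨ih.1.imp (fun h => hadj.trans h) (fun h => hadj.trans h), ih.2⟩
  unfold numComp
  rw [Nat.card_eq_fintype_card, Nat.card_eq_fintype_card, ← Fintype.card_option]
  let f : G1.ConnectedComponent → Option G2.ConnectedComponent := fun c =>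
    if c = G1.connectedComponentMk a then none else some (c.map (SimpleGraph.Hom.ofLE hle))
  apply Fintype.card_le_of_injective f
  intro c c' h
  induction c using SimpleGraph.ConnectedComponent.ind with | _ x =>
  induction c' using SimpleGraph.ConnectedComponent.ind with | _ y =>
  simp only [f, SimpleGraph.ConnectedComponent.eq] at h
  by_cases hx : G1.Reachable x a <;> by_cases hy : G1.Reachable y a
  · exact SimpleGraph.ConnectedComponent.sound (hx.trans hy.symm)
  · simp [hx, hy] at h
  · simp [hx, hy] at h
  · simp [hx, hy] at h
    apply SimpleGraph.ConnectedComponent.sound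
    rcases key x y h with h | ⟨h1, h2⟩
    · exact h
    · exact (h1.resolve_left hx).trans (h2.resolve_left hy).symm

lemma exists_sub_split (G : SimpleGraph V) (h : ℕ) (S : Finset (Sym2 V))
    (h0 : numComp G ≤ h) (hS : h ≤ numComp (G.deleteEdges ↑S)) :
    ∃ T ⊆ S, numComp (G.deleteEdges ↑T) = h := by
  induction S using Finset.induction_on with
  | empty => exact ⟨∅, subset_rfl, by simp at hS ⊢; omega⟩
  | @insert e S he ih =>
    by_cases hc : h ≤ numComp (G.deleteEdges ↑S)
    · obtain ⟨T, hT, hT'⟩ := ih hc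
      exact ⟨T, hT.trans (Finset.subset_insert _ _), hT'⟩
    · refine ⟨insert e S, subset_rfl, ?_⟩
      induction e using Sym2.ind with | _ a b =>
      have := numComp_step G S a b
      omega

end helpers

section main
variable {V : Type*} [Fintype V] [DecidableEq V] (G : SimpleGraph V) [DecidableRel G.Adj]
  (w : Sym2 V → ℝ)

/-- edges meeting `s` -/
noncomputable def inc (s : Finset V) : Finset (Sym2 V) :=
  G.edgeFinset.filter (fun e => ∃ v ∈ s, v ∈ e)

/-- weighted degree -/
noncomputable def wdeg (v : V) : ℝ := ∑ e ∈ G.edgeFinset, if v ∈ e then w e else 0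

lemma inc_numComp (s : Finset V) (hs : #s < Fintype.card V) :
    #s + 1 ≤ numComp (G.deleteEdges ↑(inc G s)) := by
  obtain ⟨z, hz⟩ : ∃ z, z ∉ s := by
    by_contra! h
    rw [Finset.eq_univ_iff_forall.mpr h, Finset.card_univ] at hs
    omega
  have iso : ∀ x ∈ s, ∀ y, (G.deleteEdges ↑(inc G s)).Reachable x y → x = y := by
    intro x hx y ⟨p⟩
    cases p with
    | nil => rfl
    | @cons _ v _ h p =>
      exfalso
      rw [SimpleGraph.deleteEdges_adj] at h
      apply h.2
      simp only [inc, Finset.coe_filter, SimpleGraph.mem_edgeFinset, Set.mem_ofPred_eq]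
      exact ⟨h.1, x, hx, by simp⟩
  rw [← Finset.card_insert_of_notMem hz, numComp, Nat.card_eq_fintype_card, ← Fintype.card_coe]
  apply Fintype.card_le_of_injective
    (fun x : ↥(insert z s) => (G.deleteEdges ↑(inc G s)).connectedComponentMk x.1)
  rintro ⟨x, hx⟩ ⟨y, hy⟩ h
  simp only [SimpleGraph.ConnectedComponent.eq] at h
  rw [Subtype.mk.injEq]
  rcases Finset.mem_insert.mp hx with rfl | hx
  · rcases Finset.mem_insert.mp hy with rfl | hy
    · rfl
    · exact (iso y hy x h.symm).symm
  · exact iso x hx y h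

lemma split_of_set (hw : ∀ e ∈ G.edgeSet, 0 < w e) (hconn : G.Connected)
    (s : Finset V) (hs : #s < Fintype.card V) :
    ∃ S, IsSplit G S (#s + 1) ∧ weight w S ≤ weight w (inc G s) := by
  have h1 : numComp G = 1 := by
    unfold numComp
    rw [Nat.card_eq_one_iff_unique]
    exact ⟨hconn.preconnected.subsingleton_connectedComponent,
      hconn.nonempty.map G.connectedComponentMk⟩
  obtain ⟨T, hT, hT'⟩ := exists_sub_split G (#s + 1) (inc G s) (by omega) (inc_numComp G s hs)
  have hE : ∀ e ∈ inc G s, e ∈ G.edgeSet := fun e he =>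
    SimpleGraph.mem_edgeFinset.mp (Finset.mem_filter.mp he).1
  refine ⟨T, ⟨fun e he => hE e (hT he), by rw [hT', h1]; rfl⟩, ?_⟩
  exact Finset.sum_le_sum_of_subset_of_nonneg hT (fun e he _ => (hw e (hE e he)).le)

lemma sum_wdeg (s : Finset V) :
    ∑ v ∈ s, wdeg G w v = ∑ e ∈ G.edgeFinset, (#(s.filter (fun v => v ∈ e)) : ℝ) * w e := by
  unfold wdeg
  rw [Finset.sum_comm]
  apply Finset.sum_congr rfl
  intro e _
  rw [← Finset.sum_filter, Finset.sum_const, nsmul_eq_mul]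

lemma sum_wdeg_univ : ∑ v, wdeg G w v = 2 * weight w G.edgeFinset := by
  rw [sum_wdeg, weight, Finset.mul_sum]
  apply Finset.sum_congr rfl
  intro e he
  congr 1
  have hd : ¬ e.IsDiag := G.not_isDiag_of_mem_edgeSet (SimpleGraph.mem_edgeFinset.mp he)
  have : (univ.filter (fun v => v ∈ e)) = e.toFinset := by ext; simp
  rw [this, Sym2.card_toFinset_of_not_isDiag e hd]; norm_num

lemma weight_inc (hw : ∀ e ∈ G.edgeSet, 0 < w e) (s : Finset V) :
    weight w (inc G s) ≤ ∑ v ∈ s, wdeg G w v := by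
  rw [sum_wdeg, weight, inc, Finset.sum_filter]
  apply Finset.sum_le_sum
  intro e he
  have h0 := hw e (SimpleGraph.mem_edgeFinset.mp he)
  split_ifs with h
  · obtain ⟨v, hv, hve⟩ := h
    have : 1 ≤ #(s.filter (fun v => v ∈ e)) := Finset.card_pos.mpr ⟨v, by simp [hv, hve]⟩
    have : (1:ℝ) ≤ #(s.filter (fun v => v ∈ e)) := by exact_mod_cast this
    nlinarith
  · positivity

lemma weight_inc_edge (hw : ∀ e ∈ G.edgeSet, 0 < w e) (s : Finset V) (a b : V)
    (hab : G.Adj a b) (ha : a ∈ s) (hb : b ∈ s) :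
    weight w (inc G s) + w s(a, b) ≤ ∑ v ∈ s, wdeg G w v := by
  have hmem : s(a, b) ∈ G.edgeFinset := by simpa using hab
  have : w s(a, b) = ∑ e ∈ G.edgeFinset, if e = s(a, b) then w e else 0 := by
    rw [Finset.sum_ite_eq' G.edgeFinset, if_pos hmem]
  rw [sum_wdeg, weight, inc, Finset.sum_filter, this, ← Finset.sum_add_distrib]
  apply Finset.sum_le_sum
  intro e he
  have h0 := hw e (SimpleGraph.mem_edgeFinset.mp he)
  by_cases hc : e = s(a, b)
  · have : 2 ≤ #(s.filter (fun v => v ∈ e)) := by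
      rw [← Finset.card_pair hab.ne]
      apply Finset.card_le_card
      intro x hx
      simp only [Finset.mem_insert, Finset.mem_singleton] at hx
      rcases hx with rfl | rfl <;> simp [hc, ha, hb]
    have : (2:ℝ) ≤ #(s.filter (fun v => v ∈ e)) := by exact_mod_cast this
    rw [if_pos hc]
    split_ifs <;> nlinarith
  rw [if_neg hc, add_zero]
  split_ifs with h
  · obtain ⟨v, hv, hve⟩ := h
    have : 1 ≤ #(s.filter (fun v => v ∈ e)) := Finset.card_pos.mpr ⟨v, by simp [hv, hve]⟩
    have : (1:ℝ) ≤ #(s.filter (fun v => v ∈ e)) := by exact_mod_cast this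
    nlinarith
  · positivity

lemma exists_low (δ : V → ℝ) (h0 : ∑ v, δ v = 0) (s : Finset V) (hs : #s < Fintype.card V) :
    ∃ x ∉ s, δ x * ((Fintype.card V : ℝ) - #s) ≤ - ∑ v ∈ s, δ v := by
  have hc : #(sᶜ) = Fintype.card V - #s := Finset.card_compl s
  have hne : (sᶜ).Nonempty := Finset.card_pos.mp (by omega)
  obtain ⟨x, hx, hm⟩ := Finset.exists_min_image sᶜ δ hne
  refine ⟨x, Finset.mem_compl.mp hx, ?_⟩
  have h1 := Finset.card_nsmul_le_sum sᶜ δ (δ x) hm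
  have h2 := Finset.sum_add_sum_compl s δ
  rw [hc, nsmul_eq_mul, Nat.cast_sub hs.le] at h1
  linarith

lemma sum_dev_le (δ : V → ℝ) (h0 : ∑ v, δ v = 0) (hk : 4 ≤ Fintype.card V) (η : ℝ) (hη : 0 ≤ η)
    (hp : ∀ u v, u ≠ v → - η ≤ δ u + δ v) (H : Finset V) :
    ∑ v ∈ H, δ v ≤ (Fintype.card V / 2 + 1) * η := by
  have : Nonempty V := Fintype.card_pos_iff.mp (by omega)
  obtain ⟨v0, -, hm⟩ := Finset.exists_min_image univ δ Finset.univ_nonempty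
  have hk' : (4:ℝ) ≤ Fintype.card V := by exact_mod_cast hk
  have hv0 : -(3/2) * η ≤ δ v0 := by
    obtain ⟨x, hx, hx'⟩ := exists_low δ h0 {v0} (by simp; omega)
    have := hp v0 x (by simpa [eq_comm] using hx)
    simp at hx'
    by_contra! hlt
    nlinarith
  have hall : ∀ v, -(if v = v0 then 3/2 * η else η / 2) ≤ δ v := by
    intro v
    split_ifs with h
    · subst h; linarith
    · have := hp v v0 h
      have := hm v (mem_univ _)
      linarith
  have h2 := Finset.sum_add_sum_compl H δ
  have h3 : ∑ v ∈ Hᶜ, -(if v = v0 then 3/2 * η else η / 2) ≤ ∑ v ∈ Hᶜ, δ v :=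
    Finset.sum_le_sum (fun v _ => hall v)
  have h4 : ∑ v ∈ Hᶜ, (if v = v0 then 3/2 * η else η / 2) ≤
      ∑ v, (if v = v0 then 3/2 * η else η / 2) :=
    Finset.sum_le_sum_of_subset_of_nonneg (Finset.subset_univ _)
      (fun v _ _ => by split_ifs <;> positivity)
  have h5 : ∑ v, (if v = v0 then 3/2 * η else η / 2) = (Fintype.card V / 2 + 1) * η := by
    have : ∀ v, (if v = v0 then 3/2 * η else η / 2) = η / 2 + (if v = v0 then η else 0) := by
      intro v; split_ifs <;> ring
    simp only [this, Finset.sum_add_distrib, Finset.sum_const, nsmul_eq_mul, Finset.card_univ,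
      Finset.sum_ite_eq', Finset.mem_univ, if_true]
    ring
  rw [Finset.sum_neg_distrib] at h3
  linarith

/-- key lemma: a heavy edge between two vertices of not too large degree -/
lemma exists_edge (hw : ∀ e ∈ G.edgeSet, 0 < w e) (hconn : G.Connected)
    (hnorm : weight w G.edgeFinset = 1) (hk : 4 ≤ Fintype.card V) (ε : ℝ)
    (hε : ε = 1 / (35 * beta G)) (δ : V → ℝ)
    (hδ : ∀ v, δ v = Fintype.card V * wdeg G w v - 2) (h0 : ∑ v, δ v = 0)
    (hp : ∀ u v, u ≠ v → - (3/2 * ε) ≤ δ u + δ v) :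
    ∃ a b, ∃ t : ℝ, 0 ≤ t ∧ G.Adj a b ∧ δ a ≤ t ∧ δ b ≤ t ∧
      2 * t + ε ≤ Fintype.card V * w s(a, b) := by
  have hk' : (4:ℝ) ≤ Fintype.card V := by exact_mod_cast hk
  have hm : (Fintype.card V : ℝ) ≤ #G.edgeFinset + 1 := by
    have := hconn.card_vert_le_card_edgeSet_add_one
    rw [Nat.card_eq_fintype_card, Nat.card_eq_fintype_card, ← SimpleGraph.edgeFinset_card] at this
    exact_mod_cast this
  set k : ℝ := ((Fintype.card V : ℕ) : ℝ) with hkdef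
  set m : ℝ := ((#G.edgeFinset : ℕ) : ℝ) with hmdef
  have hmp : 0 < m := by linarith
  have hε' : ε = k / m / 35 := by
    rw [hε, beta, ← hkdef, ← hmdef]; field_simp
  set q := k / m with hq
  have hq0 : 0 < q := by positivity
  have hq1 : q ≤ 4 / 3 := by rw [hq, div_le_iff₀ hmp]; linarith
  have hqm : q * m = k := by rw [hq]; field_simp
  by_contra! hcon
  set H := univ.filter (fun v => q / 6 < δ v) with hH
  have hlow := hcon
  have hs := sum_dev_le δ h0 hk (3/2 * ε) (by rw [hε']; positivity) hp H
  have hcard : (#H : ℝ) * (q / 6) ≤ ∑ v ∈ H, δ v := by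
    have := Finset.card_nsmul_le_sum H δ (q/6) (fun v hv => (Finset.mem_filter.mp hv).2.le)
    rwa [nsmul_eq_mul] at this
  have hsum : ∑ v ∈ H, δ v = k * ∑ v ∈ H, wdeg G w v - 2 * #H := by
    simp only [hδ, Finset.sum_sub_distrib, Finset.mul_sum, Finset.sum_const, nsmul_eq_mul]
    ring
  have hinc := weight_inc G w hw H
  have hsplit : weight w (inc G H) +
      ∑ e ∈ G.edgeFinset.filter (fun e => ¬ ∃ v ∈ H, v ∈ e), w e = 1 := by
    rw [← hnorm, weight, weight, inc]
    exact Finset.sum_filter_add_sum_filter_not _ _ _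
  have hrest : k * ∑ e ∈ G.edgeFinset.filter (fun e => ¬ ∃ v ∈ H, v ∈ e), w e
      ≤ m * (q / 3 + ε) := by
    rw [Finset.mul_sum]
    calc _ ≤ ∑ e ∈ G.edgeFinset.filter (fun e => ¬ ∃ v ∈ H, v ∈ e), (q / 3 + ε) := by
          apply Finset.sum_le_sum
          intro e he
          induction e using Sym2.ind with | _ a b =>
          rw [Finset.mem_filter] at he
          obtain ⟨hab, hn⟩ := he
          push Not at hn
          have ha : δ a ≤ q / 6 := by
            by_contra! hc
            exact hn a (by simp [hH, hc]) (by simp)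
          have hb : δ b ≤ q / 6 := by
            by_contra! hc
            exact hn b (by simp [hH, hc]) (by simp)
          have := hcon a b (q/6) (by positivity) (by simpa using hab) ha hb
          linarith
      _ = #(G.edgeFinset.filter (fun e => ¬ ∃ v ∈ H, v ∈ e)) * (q / 3 + ε) := by
          rw [Finset.sum_const, nsmul_eq_mul]
      _ ≤ m * (q / 3 + ε) := by
          apply mul_le_mul_of_nonneg_right _ (by rw [hε']; positivity)
          rw [hmdef]
          exact_mod_cast Finset.card_filter_le _ _
  have hs' : ∑ v ∈ H, δ v ≤ k * q * (9 / 8 / 35) := by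
    rw [hε'] at hs
    nlinarith
  have hcard' : (#H : ℝ) ≤ k * (27 / 4 / 35) := by
    have : (#H : ℝ) * q ≤ (k * (27 / 4 / 35)) * q := by linarith
    exact le_of_mul_le_mul_right this hq0
  have hr' : m * (q / 3 + ε) = k * (1 / 3 + 1 / 35) := by
    rw [hε', ← hqm]; ring
  have hkq : k * q ≤ k * (4/3) := by nlinarith
  have hinc' : k * weight w (inc G H) ≤ k * ∑ v ∈ H, wdeg G w v := by
    apply mul_le_mul_of_nonneg_left hinc (by linarith)
  have : k * weight w (inc G H) +
    k * ∑ e ∈ G.edgeFinset.filter (fun e => ¬ ∃ v ∈ H, v ∈ e), w e = k := by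
    rw [← mul_add, hsplit, mul_one]
  linarith

end main

theorem exists_low_density_three_and_four_way_splits
    {V : Type*} [Fintype V] [DecidableEq V]
    (G : SimpleGraph V) [DecidableRel G.Adj]
    (w : Sym2 V → ℝ) (hw : ∀ e ∈ G.edgeSet, 0 < w e)
    (hconn : G.Connected)
    (hnorm : weight w G.edgeFinset = 1)
    (ε : ℝ) (hε : ε = 1 / (35 * beta G)) :
    (3 ≤ Fintype.card V → ∃ S : Finset (Sym2 V), IsSplit G S 3 ∧
      density w S 3 ≤ (2 - ε / 2) / (Fintype.card V : ℝ)) ∧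
    (4 ≤ Fintype.card V → ∃ S : Finset (Sym2 V), IsSplit G S 4 ∧
      density w S 4 ≤ (2 - ε / 3) / (Fintype.card V : ℝ)) := by
  set k : ℝ := ((Fintype.card V : ℕ) : ℝ) with hkdef
  have hεb : 3 ≤ Fintype.card V → 0 < ε ∧ ε ≤ 1 := by
    intro hk
    have hk' : (3:ℝ) ≤ k := by rw [hkdef]; exact_mod_cast hk
    have hm : k ≤ #G.edgeFinset + 1 := by
      have := hconn.card_vert_le_card_edgeSet_add_one
      rw [Nat.card_eq_fintype_card, Nat.card_eq_fintype_card,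
        ← SimpleGraph.edgeFinset_card] at this
      rw [hkdef]
      exact_mod_cast this
    have hmp : (0:ℝ) < #G.edgeFinset := by linarith
    have hb : 1 / 35 ≤ beta G := by
      rw [beta, ← hkdef, le_div_iff₀ (by linarith)]; linarith
    rw [hε]
    refine ⟨by positivity, ?_⟩
    rw [div_le_one (by linarith)]; linarith
  have hle1 : ∀ s, weight w (inc G s) ≤ 1 := by
    intro s
    rw [← hnorm]
    exact Finset.sum_le_sum_of_subset_of_nonneg (Finset.filter_subset _ _)
      (fun e he _ => (hw e (SimpleGraph.mem_edgeFinset.mp he)).le)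
  let δ : V → ℝ := fun v => k * wdeg G w v - 2
  have hδ : ∀ v, δ v = k * wdeg G w v - 2 := fun v => rfl
  have h0 : ∑ v, δ v = 0 := by
    simp only [hδ, Finset.sum_sub_distrib, ← Finset.mul_sum, sum_wdeg_univ, hnorm,
      Finset.sum_const, nsmul_eq_mul, Finset.card_univ]
    rw [hkdef]; ring
  have hds : ∀ s : Finset V, k * ∑ v ∈ s, wdeg G w v = ∑ v ∈ s, δ v + 2 * #s := by
    intro s
    simp only [hδ, Finset.sum_sub_distrib, Finset.mul_sum, Finset.sum_const, nsmul_eq_mul]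
    ring
  -- reduction to vertex sets
  have red3 : ∀ s : Finset V, #s = 2 → 3 ≤ Fintype.card V → k * weight w (inc G s) ≤ 4 - ε →
      ∃ S : Finset (Sym2 V), IsSplit G S 3 ∧ density w S 3 ≤ (2 - ε / 2) / k := by
    intro s hs hk h
    have hk' : (3:ℝ) ≤ k := by rw [hkdef]; exact_mod_cast hk
    obtain ⟨S, hS, hS'⟩ := split_of_set G w hw hconn s (by omega)
    rw [hs] at hS
    refine ⟨S, hS, ?_⟩
    rw [density, le_div_iff₀ (by linarith)]
    push_cast
    nlinarith
  have red4 : ∀ s : Finset V, #s = 3 → 4 ≤ Fintype.card V → k * weight w (inc G s) ≤ 6 - ε →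
      ∃ S : Finset (Sym2 V), IsSplit G S 4 ∧ density w S 4 ≤ (2 - ε / 3) / k := by
    intro s hs hk h
    have hk' : (4:ℝ) ≤ k := by rw [hkdef]; exact_mod_cast hk
    obtain ⟨S, hS, hS'⟩ := split_of_set G w hw hconn s (by omega)
    rw [hs] at hS
    refine ⟨S, hS, ?_⟩
    rw [density, le_div_iff₀ (by linarith)]
    push_cast
    nlinarith
  have hincδ : ∀ s : Finset V, 0 ≤ k → k * weight w (inc G s) ≤ ∑ v ∈ s, δ v + 2 * #s := by
    intro s hk
    rw [← hds]
    exact mul_le_mul_of_nonneg_left (weight_inc G w hw s) hk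
  have hincδ' : ∀ (s : Finset V) (a b : V), 0 ≤ k → G.Adj a b → a ∈ s → b ∈ s →
      k * weight w (inc G s) + k * w s(a, b) ≤ ∑ v ∈ s, δ v + 2 * #s := by
    intro s a b hk hab ha hb
    rw [← hds, ← mul_add]
    exact mul_le_mul_of_nonneg_left (weight_inc_edge G w hw s a b hab ha hb) hk
  have hk0 : 0 ≤ k := by rw [hkdef]; positivity
  constructor
  · intro hk
    obtain ⟨hε0, hε1⟩ := hεb hk
    by_cases hk3 : Fintype.card V = 3
    · obtain ⟨s, -, hs⟩ := Finset.exists_subset_card_eq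
        (s := (univ : Finset V)) (n := 2) (by rw [Finset.card_univ]; omega)
      refine red3 s hs hk ?_
      have := hle1 s
      have : k = 3 := by rw [hkdef, hk3]; norm_num
      rw [this]; linarith
    by_cases hp : ∃ u v, u ≠ v ∧ δ u + δ v ≤ -ε
    · obtain ⟨u, v, huv, h⟩ := hp
      refine red3 {u, v} (Finset.card_pair huv) hk ?_
      have := hincδ {u, v} hk0
      rw [Finset.card_pair huv, Finset.sum_pair huv] at this
      push_cast at this
      linarith
    · push Not at hp
      obtain ⟨a, b, t, ht, hab, ha, hb, h⟩ := exists_edge G w hw hconn hnorm (by omega) ε hε δ hδ h0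
        (fun u v huv => by have := hp u v huv; linarith)
      refine red3 {a, b} (Finset.card_pair hab.ne) hk ?_
      have := hincδ' {a, b} a b hk0 hab (by simp) (by simp)
      rw [Finset.card_pair hab.ne, Finset.sum_pair hab.ne] at this
      push_cast at this
      linarith
  · intro hk
    obtain ⟨hε0, hε1⟩ := hεb (by omega)
    by_cases hk4 : Fintype.card V = 4
    · obtain ⟨s, -, hs⟩ := Finset.exists_subset_card_eq
        (s := (univ : Finset V)) (n := 3) (by rw [Finset.card_univ]; omega)
      refine red4 s hs hk ?_
      have := hle1 s
      have : k = 4 := by rw [hkdef, hk4]; norm_num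
      rw [this]; linarith
    have hk5 : (5:ℝ) ≤ k := by rw [hkdef]; exact_mod_cast (by omega : 5 ≤ Fintype.card V)
    have third : ∀ u v, u ≠ v → ∃ x, x ≠ u ∧ x ≠ v ∧ δ x * (k - 2) ≤ -(δ u + δ v) := by
      intro u v huv
      obtain ⟨x, hx, h⟩ := exists_low δ h0 {u, v} (by rw [Finset.card_pair huv]; omega)
      rw [Finset.card_pair huv, Finset.sum_pair huv] at h
      simp at hx
      exact ⟨x, hx.1, hx.2, by push_cast at h; exact h⟩
    have c3 : ∀ u v x, u ≠ v → x ≠ u → x ≠ v → #({x, u, v} : Finset V) = 3 ∧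
        ∑ y ∈ ({x, u, v} : Finset V), δ y = δ x + (δ u + δ v) := by
      intro u v x huv hxu hxv
      have hn : x ∉ ({u, v} : Finset V) := by simp [hxu, hxv]
      rw [Finset.card_insert_of_notMem hn, Finset.card_pair huv, Finset.sum_insert hn,
        Finset.sum_pair huv]
      exact ⟨rfl, rfl⟩
    by_cases hp : ∃ u v x, u ≠ v ∧ x ≠ u ∧ x ≠ v ∧ δ x + (δ u + δ v) ≤ -ε
    · obtain ⟨u, v, x, huv, hxu, hxv, h⟩ := hp
      obtain ⟨hc, hs⟩ := c3 u v x huv hxu hxv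
      refine red4 {x, u, v} hc hk ?_
      have := hincδ {x, u, v} hk0
      rw [hc, hs] at this
      push_cast at this
      linarith
    · push Not at hp
      obtain ⟨a, b, t, ht, hab, ha, hb, h⟩ := exists_edge G w hw hconn hnorm (by omega) ε hε δ hδ h0
        (fun u v huv => by
          obtain ⟨x, hxu, hxv, hx⟩ := third u v huv
          have := hp u v x huv hxu hxv
          by_contra! hlt
          nlinarith)
      obtain ⟨x, hxa, hxb, hx⟩ := third a b hab.ne
      obtain ⟨hc, hs⟩ := c3 a b x hab.ne hxa hxb
      refine red4 {x, a, b} hc hk ?_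
      have := hincδ' {x, a, b} a b hk0 hab (by simp) (by simp)
      rw [hc, hs] at this
      push_cast at this
      have hb : δ x + (δ a + δ b) ≤ 2 * t := by
        by_contra! hlt
        nlinarith
      linarith

end KCut
end
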